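/- In Sim, the second player cannot force a win before the fifteenth move: the first player, Red, has a strategy such that in every play in which he follows it, either the second player is at some point unable to make a legal move (so Red wins), or the play reaches a position in which fourteen edges are colored, so that Red loses only by being unable to make the fifteenth and final move. -/

import Mathlib

/-- The 15 edges of the complete graph `K_6`: unordered pairs of distinct vertices. -/
abbrev Edge6 := {e : Sym2 (Fin 6) // ¬ e.IsDiag}

/-- The edge of `K_6` joining two distinct vertices. -/
def mkEdge6 (a b : Fin 6) (h : a ≠ b) : Edge6 :=
  ⟨s(a, b), by simpa using h⟩

/-- A Sim position: a partial coloring of the edges of `K_6`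
(`none` = uncolored, `some true` = Red, `some false` = Green). -/
abbrev Pos := Edge6 → Option Bool

/-- The initial position: all edges uncolored. -/
def startPos : Pos := fun _ => none

/-- Coloring edge `e` in color `c`. -/
def colorEdge (p : Pos) (c : Bool) (e : Edge6) : Pos :=
  Function.update p e (some c)

/-- Position `p` contains a triangle all three of whose edges have color `c`. -/
def HasMonoTri (p : Pos) (c : Bool) : Prop :=
  ∃ a b d : Fin 6, ∃ hab : a ≠ b, ∃ had : a ≠ d, ∃ hbd : b ≠ d,
    p (mkEdge6 a b hab) = some c ∧ p (mkEdge6 a d had) = some c ∧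
      p (mkEdge6 b d hbd) = some c

/-- A legal Sim move for player `c` at position `p`: color a so-far uncolored edge, but
it is forbidden to create a monochromatic triangle in one's own color. -/
def Legal (p : Pos) (c : Bool) (e : Edge6) : Prop :=
  p e = none ∧ ¬ HasMonoTri (colorEdge p c e) c

/-- The player making the `k`-th move (moves are numbered from 0):
Red (`true`) moves first and the players alternate. -/
def playerAt (k : ℕ) : Bool := decide (k % 2 = 0)

/-- The position reached from `p` after the list of moves `ms`, the first element of
`ms` being made by the player moving at step `k`. -/
def posFrom (p : Pos) (k : ℕ) : List Edge6 → Pos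
  | [] => p
  | e :: ms => posFrom (colorEdge p (playerAt k) e) (k + 1) ms

/-- The position reached from the empty board after the list of moves `ms`. -/
def posAfter (ms : List Edge6) : Pos := posFrom startPos 0 ms

/-- A play (list of moves, alternately by Red and Green, Red first) in which Red follows
the strategy `σ`: every move is legal for the player making it, and every move of Red is
the one prescribed by `σ` at the current position. -/
def FollowsRed (σ : Pos → Edge6) (ms : List Edge6) : Prop :=
  ∀ i, ∀ h : i < ms.length,
    Legal (posAfter (ms.take i)) (playerAt i) (ms.get ⟨i, h⟩) ∧
    (playerAt i = true → ms.get ⟨i, h⟩ = σ (posAfter (ms.take i)))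

/-! ### A checker on bit masks -/

/-- Bit index of the edge `ab`. -/
def kk (a b : Fin 6) : ℕ := 6 * min a.val b.val + max a.val b.val

def mkEnt (x : Fin 6 × Fin 6) : ℕ × List ℕ :=
  (2 ^ kk x.1 x.2, ((List.finRange 6).filter (fun c => c ≠ x.1 ∧ c ≠ x.2)).map
    (fun c => Nat.lor (2 ^ kk x.1 c) (2 ^ kk x.2 c)))

def lgl (own occ : ℕ) (x : ℕ × List ℕ) : Bool :=
  Nat.beq (Nat.land occ x.1) 0 && x.2.all (fun m => !(Nat.beq (Nat.land own m) m))

/-- Apply `f` to `v`, evaluating `v` first. -/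
def frc (v : ℕ) (f : ℕ → Bool) : Bool := Nat.rec (f 0) (fun n _ => f (Nat.succ n)) v

theorem frc_eq (v : ℕ) (f : ℕ → Bool) : frc v f = f v := by cases v <;> rfl

def chk (LR LG : List (ℕ × List ℕ)) : ℕ → ℕ → ℕ → Bool
  | 0, _, _ => true
  | n + 1, r, g => LR.any fun x => lgl r (Nat.lor r g) x &&
      (Nat.beq n 0 || frc (Nat.lor r x.1) fun r' => frc (Nat.lor r' g) fun o =>
        LG.all fun y => !(lgl g o y) || frc (Nat.lor g y.1) (chk LR LG n r'))

def prAR : List (Fin 6 × Fin 6) :=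
  [(1, 2), (1, 3), (3, 5), (3, 4), (4, 5), (1, 5), (1, 4), (0, 4), (0, 3), (2, 5), (0, 2), (0, 1), (0, 5), (2, 4), (2, 3)]

def tbAR : List (ℕ × List ℕ) :=
  [(256, [6, 33280, 66560, 133120]),
   (512, [10, 33024, 4195328, 8390656]),
   (8388608, [40, 2560, 163840, 541065216]),
   (4194304, [24, 1536, 98304, 545259520]),
   (536870912, [48, 3072, 196608, 12582912]),
   (2048, [34, 131328, 8389120, 536871936]),
   (1024, [18, 65792, 4194816, 536872960]),
   (16, [1026, 65540, 4194312, 536870944]),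
   (8, [514, 32772, 4194320, 8388640]),
   (131072, [36, 2304, 8421376, 536936448]),
   (4, [258, 32776, 65552, 131104]),
   (2, [260, 520, 1040, 2080]),
   (32, [2050, 131076, 8388616, 536870928]),
   (65536, [20, 1280, 4227072, 537001984]),
   (32768, [12, 768, 4259840, 8519680])]

def prAG : List (Fin 6 × Fin 6) :=
  [(0, 1), (3, 4), (3, 5), (1, 2), (1, 3), (2, 5), (2, 4), (0, 2), (0, 4), (0, 5), (2, 3), (1, 4), (1, 5), (0, 3), (4, 5)]

def tbAG : List (ℕ × List ℕ) :=
  [(2, [260, 520, 1040, 2080]),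
   (4194304, [24, 1536, 98304, 545259520]),
   (8388608, [40, 2560, 163840, 541065216]),
   (256, [6, 33280, 66560, 133120]),
   (512, [10, 33024, 4195328, 8390656]),
   (131072, [36, 2304, 8421376, 536936448]),
   (65536, [20, 1280, 4227072, 537001984]),
   (4, [258, 32776, 65552, 131104]),
   (16, [1026, 65540, 4194312, 536870944]),
   (32, [2050, 131076, 8388616, 536870928]),
   (32768, [12, 768, 4259840, 8519680]),
   (1024, [18, 65792, 4194816, 536872960]),
   (2048, [34, 131328, 8389120, 536871936]),
   (8, [514, 32772, 4194320, 8388640]),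
   (536870912, [48, 3072, 196608, 12582912])]

def prBR : List (Fin 6 × Fin 6) :=
  [(2, 3), (0, 5), (0, 4), (4, 5), (0, 1), (1, 5), (1, 4), (2, 4), (2, 5), (0, 2), (3, 4), (1, 2), (3, 5), (1, 3), (0, 3)]

def tbBR : List (ℕ × List ℕ) :=
  [(32768, [12, 768, 4259840, 8519680]),
   (32, [2050, 131076, 8388616, 536870928]),
   (16, [1026, 65540, 4194312, 536870944]),
   (536870912, [48, 3072, 196608, 12582912]),
   (2, [260, 520, 1040, 2080]),
   (2048, [34, 131328, 8389120, 536871936]),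
   (1024, [18, 65792, 4194816, 536872960]),
   (65536, [20, 1280, 4227072, 537001984]),
   (131072, [36, 2304, 8421376, 536936448]),
   (4, [258, 32776, 65552, 131104]),
   (4194304, [24, 1536, 98304, 545259520]),
   (256, [6, 33280, 66560, 133120]),
   (8388608, [40, 2560, 163840, 541065216]),
   (512, [10, 33024, 4195328, 8390656]),
   (8, [514, 32772, 4194320, 8388640])]

def prBG : List (Fin 6 × Fin 6) :=
  [(2, 3), (3, 4), (2, 4), (3, 5), (1, 2), (1, 3), (2, 5), (0, 3), (0, 5), (0, 2), (1, 5), (0, 4), (0, 1), (1, 4), (4, 5)]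

def tbBG : List (ℕ × List ℕ) :=
  [(32768, [12, 768, 4259840, 8519680]),
   (4194304, [24, 1536, 98304, 545259520]),
   (65536, [20, 1280, 4227072, 537001984]),
   (8388608, [40, 2560, 163840, 541065216]),
   (256, [6, 33280, 66560, 133120]),
   (512, [10, 33024, 4195328, 8390656]),
   (131072, [36, 2304, 8421376, 536936448]),
   (8, [514, 32772, 4194320, 8388640]),
   (32, [2050, 131076, 8388616, 536870928]),
   (4, [258, 32776, 65552, 131104]),
   (2048, [34, 131328, 8389120, 536871936]),
   (16, [1026, 65540, 4194312, 536870944]),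
   (2, [260, 520, 1040, 2080]),
   (1024, [18, 65792, 4194816, 536872960]),
   (536870912, [48, 3072, 196608, 12582912])]


theorem tbAR_eq : prAR.map mkEnt = tbAR := by decide +kernel
theorem tbAG_eq : prAG.map mkEnt = tbAG := by decide +kernel
theorem tbBR_eq : prBR.map mkEnt = tbBR := by decide +kernel
theorem tbBG_eq : prBG.map mkEnt = tbBG := by decide +kernel

theorem chkA : chk tbAR tbAG 6 2 4 = true := by decide +kernel
theorem chkB : chk tbBR tbBG 6 2 32768 = true := by decide +kernel

/-! ### Soundness -/

def Wn : ℕ → Pos → Prop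
  | 0, _ => True
  | n + 1, p => ∃ e, Legal p true e ∧ ∀ f, Legal (colorEdge p true e) false f →
      Wn n (colorEdge (colorEdge p true e) false f)

def ee (π : Equiv.Perm (Fin 6)) (a b : Fin 6) (h : a ≠ b) : Edge6 :=
  mkEdge6 (π a) (π b) (π.injective.ne h)

def col (r g i : ℕ) : Option Bool :=
  if r.testBit i then some true else if g.testBit i then some false else none

def SimRep (π : Equiv.Perm (Fin 6)) (p : Pos) (r g : ℕ) : Prop :=
  ∀ a b (h : a ≠ b), p (ee π a b h) = col r g (kk a b)

theorem kk_eq : ∀ a b c d : Fin 6, kk a b = kk c d ↔ s(a, b) = s(c, d) := by decide +kernel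

theorem ee_eq (π : Equiv.Perm (Fin 6)) {a b c d : Fin 6} (h : a ≠ b) (h' : c ≠ d) :
    ee π a b h = ee π c d h' ↔ kk a b = kk c d := by
  rw [kk_eq, ee, ee, mkEdge6, mkEdge6, Subtype.mk.injEq]
  simp

theorem ee_surj (π : Equiv.Perm (Fin 6)) (e : Edge6) : ∃ a b h, e = ee π a b h := by
  obtain ⟨e, he⟩ := e
  induction e using Sym2.ind with
  | _ x y =>
    have hxy : x ≠ y := by simpa using he
    refine ⟨π.symm x, π.symm y, π.symm.injective.ne hxy, ?_⟩
    simp [ee, mkEdge6]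

theorem mk_ee (π : Equiv.Perm (Fin 6)) (x y : Fin 6) (h : x ≠ y) :
    mkEdge6 x y h = ee π (π.symm x) (π.symm y) (π.symm.injective.ne h) := by
  simp [ee, mkEdge6]

theorem mk_comm (x y : Fin 6) (h : x ≠ y) : mkEdge6 x y h = mkEdge6 y x h.symm := by
  simp [mkEdge6, Sym2.eq_swap]

theorem tb_lor (r i j : ℕ) :
    Nat.testBit (Nat.lor r (2 ^ i)) j = (r.testBit j || decide (i = j)) := by
  change Nat.testBit (r ||| 2 ^ i) j = _
  simp [Nat.testBit_two_pow]

theorem rep_red {π p r g a b} (h : a ≠ b) (H : SimRep π p r g) :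
    SimRep π (colorEdge p true (ee π a b h)) (Nat.lor r (2 ^ kk a b)) g := by
  intro c d h'
  unfold colorEdge
  by_cases hk : kk a b = kk c d
  · rw [(ee_eq π h h').2 hk, Function.update_self, col, tb_lor]
    simp [hk]
  · rw [Function.update_of_ne (fun h2 => hk ((ee_eq π h' h).1 h2).symm), H, col, col, tb_lor]
    simp [hk]

theorem rep_green {π p r g a b} (h : a ≠ b) (H : SimRep π p r g) (hr : r.testBit (kk a b) = false) :
    SimRep π (colorEdge p false (ee π a b h)) r (Nat.lor g (2 ^ kk a b)) := by
  intro c d h'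
  unfold colorEdge
  by_cases hk : kk a b = kk c d
  · rw [(ee_eq π h h').2 hk, Function.update_self, col, tb_lor, ← hk, hr]
    simp
  · rw [Function.update_of_ne (fun h2 => hk ((ee_eq π h' h).1 h2).symm), H, col, col, tb_lor]
    simp [hk]

theorem col_none (r g i : ℕ) : col r g i = none ↔ r.testBit i = false ∧ g.testBit i = false := by
  unfold col; split_ifs <;> simp_all

theorem col_true (r g i : ℕ) : col r g i = some true ↔ r.testBit i = true := by
  unfold col; split_ifs <;> simp_all

theorem occ_iff (o i : ℕ) : Nat.beq (Nat.land o (2 ^ i)) 0 = true ↔ o.testBit i = false := by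
  rw [Nat.beq_eq]
  change o &&& 2 ^ i = 0 ↔ _
  rw [Nat.and_two_pow]
  cases o.testBit i <;> simp

theorem pair_iff (o i j : ℕ) : Nat.beq (Nat.land o (Nat.lor (2 ^ i) (2 ^ j)))
    (Nat.lor (2 ^ i) (2 ^ j)) = true ↔ o.testBit i = true ∧ o.testBit j = true := by
  rw [Nat.beq_eq]
  change o &&& (2 ^ i ||| 2 ^ j) = (2 ^ i ||| 2 ^ j) ↔ _
  constructor
  · intro h
    have h1 := congrArg (fun x => Nat.testBit x i) h
    have h2 := congrArg (fun x => Nat.testBit x j) h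
    simp [Nat.testBit_two_pow] at h1 h2
    exact ⟨h1, h2⟩
  · rintro ⟨h1, h2⟩
    apply Nat.eq_of_testBit_eq
    intro k
    simp only [Nat.testBit_and, Nat.testBit_or, Nat.testBit_two_pow]
    by_cases hi : i = k
    · subst hi; simp [h1]
    · by_cases hj : j = k
      · subst hj; simp [h2]
      · simp [hi, hj]

theorem lgl_iff (own r g : ℕ) (a b : Fin 6) : lgl own (Nat.lor r g) (mkEnt (a, b)) = true ↔
    (r.testBit (kk a b) = false ∧ g.testBit (kk a b) = false) ∧
    ∀ c, c ≠ a → c ≠ b → ¬ (own.testBit (kk a c) = true ∧ own.testBit (kk b c) = true) := by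
  have h0 : Nat.testBit (Nat.lor r g) (kk a b) = (r.testBit (kk a b) || g.testBit (kk a b)) := by
    change Nat.testBit (r ||| g) _ = _
    simp
  unfold lgl mkEnt
  rw [Bool.and_eq_true, occ_iff, h0]
  simp only [List.all_eq_true, List.mem_map, List.mem_filter, List.mem_finRange,
    Bool.not_eq_true', true_and, forall_exists_index, and_imp,
    Bool.or_eq_false_iff, decide_eq_true_eq]
  refine and_congr_right fun _ => ⟨fun H c h1 h2 => ?_, fun H x c h1 h2 hx => ?_⟩
  · rw [← pair_iff, Bool.not_eq_true]
    exact H _ c h1 h2 rfl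
  · subst hx
    rw [← Bool.not_eq_true, pair_iff]
    exact H c h1 h2

theorem red_legal {π p r g a b} (h : a ≠ b) (H : SimRep π p r g) (hT : ¬ HasMonoTri p true)
    (hl : lgl r (Nat.lor r g) (mkEnt (a, b)) = true) : Legal p true (ee π a b h) := by
  obtain ⟨h1, h2⟩ := (lgl_iff _ _ _ _ _).1 hl
  refine ⟨by rw [H, col_none]; exact h1, ?_⟩
  have H' := rep_red h H
  -- a triangle, in pulled back coordinates
  have key : ∀ u v w : Fin 6, u ≠ v → u ≠ w → v ≠ w →
      (r.testBit (kk u v) || decide (kk a b = kk u v)) = true →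
      (r.testBit (kk u w) || decide (kk a b = kk u w)) = true →
      (r.testBit (kk v w) || decide (kk a b = kk v w)) = true →
      r.testBit (kk u v) = true ∧ r.testBit (kk u w) = true ∧ r.testBit (kk v w) = true := by
    have kc : ∀ x y, kk x y = kk y x := fun x y => by rw [kk_eq]; exact Sym2.eq_swap
    intro u v w huv huw hvw t1 t2 t3
    simp only [Bool.or_eq_true, decide_eq_true_eq, kk_eq, Sym2.eq_iff] at t1 t2 t3
    have q1 := h2 u
    have q2 := h2 v
    have q3 := h2 w
    have c1 := kc u v
    have c2 := kc u w
    have c3 := kc v w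
    grind
  rintro ⟨x, y, z, hxy, hxz, hyz, e1, e2, e3⟩
  rw [mk_ee π, H', col_true, tb_lor] at e1 e2 e3
  obtain ⟨f1, f2, f3⟩ := key _ _ _ (π.symm.injective.ne hxy) (π.symm.injective.ne hxz)
    (π.symm.injective.ne hyz) e1 e2 e3
  refine hT ⟨x, y, z, hxy, hxz, hyz, ?_, ?_, ?_⟩ <;> rw [mk_ee π, H, col_true] <;> assumption

theorem green_lgl {π p r g a b} (h : a ≠ b) (H : SimRep π p r g)
    (hd : ∀ i, g.testBit i = true → r.testBit i = false)
    (hl : Legal p false (ee π a b h)) : lgl g (Nat.lor r g) (mkEnt (a, b)) = true := by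
  obtain ⟨h1, h2⟩ := hl
  rw [H, col_none] at h1
  refine (lgl_iff _ _ _ _ _).2 ⟨h1, ?_⟩
  rintro c hca hcb ⟨t1, t2⟩
  have H' := rep_green h H h1.1
  apply h2
  refine ⟨π a, π b, π c, π.injective.ne h, π.injective.ne hca.symm, π.injective.ne hcb.symm,
    ?_, ?_, ?_⟩
  · refine (H' a b h).trans ?_
    simp [col, tb_lor, h1.1]
  · refine (H' a c hca.symm).trans ?_
    simp [col, tb_lor, hd _ t1, t1]
  · refine (H' b c hcb.symm).trans ?_
    simp [col, tb_lor, hd _ t2, t2]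

theorem noTri_green {p : Pos} {f : Edge6} (h : ¬ HasMonoTri p true) :
    ¬ HasMonoTri (colorEdge p false f) true := by
  have key : ∀ e, colorEdge p false f e = some true → p e = some true := by
    intro e he
    unfold colorEdge at he
    by_cases hef : e = f
    · subst hef; simp at he
    · rwa [Function.update_of_ne hef] at he
  rintro ⟨x, y, z, hxy, hxz, hyz, e1, e2, e3⟩
  exact h ⟨x, y, z, hxy, hxz, hyz, key _ e1, key _ e2, key _ e3⟩

theorem chk_sound (LR LG : List (Fin 6 × Fin 6)) (hR : ∀ x ∈ LR, x.1 ≠ x.2)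
    (hG : ∀ a b : Fin 6, a ≠ b → (a, b) ∈ LG ∨ (b, a) ∈ LG) (π : Equiv.Perm (Fin 6)) :
    ∀ n r g p, SimRep π p r g → (∀ i, g.testBit i = true → r.testBit i = false) →
      ¬ HasMonoTri p true →
      chk (LR.map mkEnt) (LG.map mkEnt) n r g = true → Wn n p := by
  intro n
  induction n with
  | zero => intros; trivial
  | succ n ih =>
    intro r g p H hd hT hc
    rw [chk, List.any_eq_true] at hc
    simp only [frc_eq] at hc
    obtain ⟨x', hx', hc⟩ := hc
    obtain ⟨⟨a, b⟩, hx, rfl⟩ := List.mem_map.1 hx'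
    have hab : a ≠ b := hR _ hx
    rw [Bool.and_eq_true, Bool.or_eq_true] at hc
    obtain ⟨hl, hc⟩ := hc
    have hL := red_legal hab H hT hl
    refine ⟨_, hL, ?_⟩
    intro f hf
    have H' := rep_red hab H
    rcases hc with h0 | hc
    · rw [Nat.beq_eq] at h0
      subst h0
      trivial
    · have hf' : ∃ u v, ∃ h : u ≠ v, (u, v) ∈ LG ∧ f = ee π u v h := by
        obtain ⟨u, v, h, rfl⟩ := ee_surj π f
        rcases hG u v h with h1 | h1
        · exact ⟨u, v, h, h1, rfl⟩
        · exact ⟨v, u, h.symm, h1, mk_comm _ _ _⟩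
      obtain ⟨u, v, huv, hm, rfl⟩ := hf'
      have hab1 := ((lgl_iff _ _ _ _ _).1 hl).1
      have hd' : ∀ i, g.testBit i = true → (Nat.lor r (2 ^ kk a b)).testBit i = false := by
        intro i hi
        rw [tb_lor, hd i hi]
        have : kk a b ≠ i := by
          rintro rfl
          rw [hi] at hab1
          simp at hab1
        simp [this]
      have hg := green_lgl huv H' hd' hf
      have hfree := ((lgl_iff _ _ _ _ _).1 hg).1.1
      have := (List.all_eq_true.1 hc) _ (List.mem_map_of_mem hm)
      have hg' : lgl g (Nat.lor (Nat.lor r (mkEnt (a, b)).1) g) (mkEnt (u, v)) = true := hg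
      rw [hg'] at this
      simp only [Bool.not_true, Bool.false_or] at this
      refine ih _ _ _ (rep_green huv H' hfree) ?_ (noTri_green hL.2) this
      intro i hi
      rw [tb_lor, Bool.or_eq_true] at hi
      rcases hi with hi | hi
      · exact hd' i hi
      · rw [← of_decide_eq_true hi]; exact hfree

def pp (i : Bool) (u v : Fin 6) : Equiv.Perm (Fin 6) :=
  (if i then Equiv.swap 0 1 else 1) * Equiv.swap 2 u * Equiv.swap 3 v

theorem sym_cases : ∀ x y : Fin 6, x ≠ y → s(x, y) ≠ s(0, 1) → ∃ i u v,
    s(pp i u v 0, pp i u v 1) = s(0, 1) ∧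
    (s(pp i u v 0, pp i u v 2) = s(x, y) ∨ s(pp i u v 2, pp i u v 3) = s(x, y)) := by
  decide +kernel

theorem noTri_start : ¬ HasMonoTri startPos true := by
  rintro ⟨x, y, z, hxy, hxz, hyz, e1, _⟩
  simp [startPos] at e1

theorem rep_start (π) : SimRep π startPos 0 0 := by
  intro a b h
  simp [startPos, col]

theorem win_start : Wn 7 startPos := by
  have hl0 : Legal startPos true (mkEdge6 0 1 (by decide)) :=
    red_legal (π := 1) (by decide) (rep_start 1) noTri_start (by decide +kernel)
  refine ⟨mkEdge6 0 1 (by decide), hl0, ?_⟩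
  intro f hf
  have h1 := noTri_green (f := f) hl0.2
  obtain ⟨x, y, hxy, rfl⟩ := ee_surj 1 f
  have hne : s(x, y) ≠ s(0, 1) := by
    intro h
    have : ee 1 x y hxy = mkEdge6 0 1 (by decide) := Subtype.ext h
    have h2 := hf.1
    rw [this] at h2
    simp [colorEdge] at h2
  obtain ⟨i, u, v, hp, hq⟩ := sym_cases x y hxy hne
  generalize pp i u v = π at hp hq
  have he : mkEdge6 0 1 (by decide) = ee π 0 1 (by decide) := Subtype.ext hp.symm
  have H' := rep_red (π := π) (a := 0) (b := 1) (by decide) (rep_start π)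
  rw [← he] at H'
  rcases hq with hq | hq
  · have hf' : ee 1 x y hxy = ee π 0 2 (by decide) := Subtype.ext hq.symm
    rw [hf'] at h1 ⊢
    have H2 := rep_green (a := 0) (b := 2) (by decide) H' (by decide +kernel)
    refine chk_sound prAR prAG (by decide +kernel) (by decide +kernel) π 6 2 4 _ H2 ?_ h1
      (by rw [tbAR_eq, tbAG_eq]; exact chkA)
    intro i hi
    have h4 : (4 : ℕ) = 2 ^ 2 := rfl
    have h2 : (2 : ℕ) = 2 ^ 1 := rfl
    rw [h4, Nat.testBit_two_pow] at hi
    have : 2 = i := by simpa using hi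
    subst this; rfl
  · have hf' : ee 1 x y hxy = ee π 2 3 (by decide) := Subtype.ext hq.symm
    rw [hf'] at h1 ⊢
    have H2 := rep_green (a := 2) (b := 3) (by decide) H' (by decide +kernel)
    refine chk_sound prBR prBG (by decide +kernel) (by decide +kernel) π 6 2 32768 _ H2 ?_ h1
      (by rw [tbBR_eq, tbBG_eq]; exact chkB)
    intro i hi
    have h4 : (32768 : ℕ) = 2 ^ 15 := rfl
    rw [h4, Nat.testBit_two_pow] at hi
    have : 15 = i := by simpa using hi
    subst this; rfl

/-! ### From positions to plays -/

def cnt (p : Pos) : ℕ := (Finset.univ.filter (fun e => p e = none)).card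

theorem cnt_start : cnt startPos = 15 := by
  simp only [cnt, startPos, Finset.filter_true]
  decide +kernel

theorem cnt_color {p : Pos} {e : Edge6} (c : Bool) (h : p e = none) :
    cnt (colorEdge p c e) + 1 = cnt p := by
  unfold cnt
  have : Finset.univ.filter (fun e' => colorEdge p c e e' = none) =
      (Finset.univ.filter (fun e' => p e' = none)).erase e := by
    ext e'
    simp only [Finset.mem_filter, Finset.mem_univ, true_and, Finset.mem_erase]
    unfold colorEdge
    by_cases he : e' = e
    · subst he; simp
    · simp [Function.update_of_ne he, he]
  rw [this]
  exact Finset.card_erase_add_one (by simp [h])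

open Classical in
noncomputable def sig (p : Pos) : Edge6 :=
  if h : ∃ e, Legal p true e ∧ ∀ f, Legal (colorEdge p true e) false f →
      Wn ((cnt p - 1) / 2 - 1) (colorEdge (colorEdge p true e) false f) then h.choose
  else if h' : ∃ e, Legal p true e then h'.choose else mkEdge6 0 1 (by decide)

theorem sig_legal (p : Pos) (h' : ∃ e, Legal p true e) : Legal p true (sig p) := by
  unfold sig
  split_ifs with h
  · exact h.choose_spec.1
  · exact h'.choose_spec

theorem sig_win (p : Pos) (n : ℕ) (hn : (cnt p - 1) / 2 = n + 1) (hW : Wn (n + 1) p) (f : Edge6)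
    (hf : Legal (colorEdge p true (sig p)) false f) :
    Wn n (colorEdge (colorEdge p true (sig p)) false f) := by
  have hn' : (cnt p - 1) / 2 - 1 = n := by omega
  have h : ∃ e, Legal p true e ∧ ∀ f, Legal (colorEdge p true e) false f →
      Wn ((cnt p - 1) / 2 - 1) (colorEdge (colorEdge p true e) false f) := by
    rw [hn']; exact hW
  have hs : sig p = h.choose := by unfold sig; rw [dif_pos h]
  have := h.choose_spec.2 f
  rw [← hs, hn'] at this
  exact this hf

theorem posFrom_append (p : Pos) (k : ℕ) (ms : List Edge6) (e : Edge6) :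
    posFrom p k (ms ++ [e]) = colorEdge (posFrom p k ms) (playerAt (k + ms.length)) e := by
  induction ms generalizing p k with
  | nil => rfl
  | cons a ms ih =>
    simp only [List.cons_append, posFrom, ih, List.length_cons]
    rw [show k + 1 + ms.length = k + (ms.length + 1) by omega]

theorem posAfter_append (ms : List Edge6) (e : Edge6) :
    posAfter (ms ++ [e]) = colorEdge (posAfter ms) (playerAt ms.length) e := by
  unfold posAfter
  rw [posFrom_append, Nat.zero_add]

theorem follows_append {σ} {ms : List Edge6} {e : Edge6} (h : FollowsRed σ (ms ++ [e])) :
    FollowsRed σ ms ∧ Legal (posAfter ms) (playerAt ms.length) e ∧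
      (playerAt ms.length = true → e = σ (posAfter ms)) := by
  constructor
  · intro i hi
    have := h i (by simp; omega)
    simpa [List.take_append_of_le_length hi.le, List.getElem_append_left hi] using this
  · have := h ms.length (by simp)
    simpa using this

theorem invariant (m : ℕ) : ∀ ms : List Edge6, FollowsRed sig ms → ms.length = 2 * m →
    cnt (posAfter ms) + 2 * m = 15 ∧ Wn (7 - m) (posAfter ms) := by
  induction m with
  | zero =>
    intro ms _ h
    have : ms = [] := List.length_eq_zero_iff.1 (by omega)
    subst this
    exact ⟨cnt_start, win_start⟩
  | succ m ih =>
    intro ms hF hl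
    rcases List.eq_nil_or_concat ms with rfl | ⟨ms1, f, rfl⟩
    · simp at hl
    rcases List.eq_nil_or_concat ms1 with rfl | ⟨ms0, e, rfl⟩
    · simp at hl; omega
    simp only [List.concat_eq_append] at hF hl ⊢
    obtain ⟨hF1, hLf, -⟩ := follows_append hF
    obtain ⟨hF0, hLe, he⟩ := follows_append hF1
    have hl0 : ms0.length = 2 * m := by simp at hl; omega
    have hp0 : playerAt ms0.length = true := by simp [playerAt, hl0]
    have hp1 : playerAt (ms0 ++ [e]).length = false := by
      simp [playerAt, hl0]
    obtain ⟨hc, hW⟩ := ih ms0 hF0 hl0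
    rw [posAfter_append (ms0 ++ [e]), hp1]
    rw [hp1] at hLf
    rw [posAfter_append ms0, hp0] at hLf ⊢
    rw [hp0] at hLe
    have he' := he hp0
    have c1 := cnt_color true hLe.1
    have c2 := cnt_color false hLf.1
    refine ⟨by omega, ?_⟩
    have hm : 7 - m = (7 - (m + 1)) + 1 := by omega
    rw [hm] at hW
    rw [he'] at hLf ⊢
    exact sig_win _ _ (by omega) hW f hLf

/-- In Sim, the second player cannot force a win before the fifteenth move: Red has a
strategy `σ` such that in every play in which he follows it, (a) whenever it is Red's
turn and Red has any legal move, the move prescribed by `σ` is legal, and (b) whenever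
it is Red's turn and Red has no legal move at all, exactly fourteen moves have already
been made, i.e. fourteen edges are colored — so Red loses only by being unable to make
the fifteenth and final move (and otherwise Green is at some point unable to move and
Red wins). -/
theorem red_not_stuck_before_move_fifteen :
    ∃ σ : Pos → Edge6, ∀ ms : List Edge6, FollowsRed σ ms →
      playerAt ms.length = true →
        ((∃ e, Legal (posAfter ms) true e) →
            Legal (posAfter ms) true (σ (posAfter ms))) ∧
        ((∀ e, ¬ Legal (posAfter ms) true e) → ms.length = 14) := by
  refine ⟨sig, fun ms hF hp => ⟨sig_legal _, fun hno => ?_⟩⟩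
  have hev : ms.length % 2 = 0 := by simpa [playerAt] using hp
  obtain ⟨m, hm⟩ : ∃ m, ms.length = 2 * m := ⟨ms.length / 2, by omega⟩
  obtain ⟨hc, hW⟩ := invariant m ms hF hm
  by_contra hne
  have h7 : 7 - m = (6 - m) + 1 := by omega
  rw [h7] at hW
  obtain ⟨e, he, -⟩ := hW
  exact hno e he
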